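/- Let S(0,1) denote the standard semicircle law. For every integer k ≥ 0 and every real polynomial p, ∫_{ℝ^{k+1}} (Δᵏp − M_k(p))² dS(0,1)^{⊗(k+1)} ≤ (k+1)·∫_{ℝ^{k+2}} (Δ^{k+1}p)² dS(0,1)^{⊗(k+2)}, where M_k(p) = ∫_{ℝ^{k+1}} Δᵏp dS(0,1)^{⊗(k+1)}. (This is the scalar, one-variable form of the generalized Poincaré inequality on the Wigner space, with constant C_l = 1 for semicircular variables.) -/

import Mathlib

open MeasureTheory

/-- The semicircular distribution of variance `v`; `semicircle 1` is the standard
semicircle law `S(0,1)`. -/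
noncomputable def semicircle (v : ℝ) : Measure ℝ :=
  volume.withDensity fun x => ENNReal.ofReal (Real.sqrt (4 * v - x ^ 2) / (2 * Real.pi * v))

/-- `Δᵏ[x^m](x₀,…,x_k) = Σ_{a₀+⋯+a_k = m−k} x₀^{a₀}⋯x_k^{a_k}` (zero when `m < k`). -/
noncomputable def divDiffMonomial (k m : ℕ) (x : Fin (k + 1) → ℝ) : ℝ :=
  if k ≤ m then
    ∑ a ∈ Finset.Nat.antidiagonalTuple (k + 1) (m - k), ∏ i, x i ^ a i
  else 0

/-- The `k`-th divided difference `Δᵏp` of a real polynomial `p`, extended to a polynomial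
function on `ℝ^{k+1}`. -/
noncomputable def divDiff (k : ℕ) (p : Polynomial ℝ) (x : Fin (k + 1) → ℝ) : ℝ :=
  ∑ m ∈ Finset.range (p.natDegree + 1), p.coeff m * divDiffMonomial k m x

open Polynomial in
theorem integral_cos_int_mul (j : ℤ) :
    ∫ θ in (0:ℝ)..Real.pi, Real.cos (j * θ) = if j = 0 then Real.pi else 0 := by
  have h := Chebyshev.integral_measureT_eq_integral_cos (f := fun x => (Chebyshev.T ℝ j).eval x)
  simp only [Chebyshev.T_real_cos] at h
  rw [← h]
  split_ifs with hj
  · subst hj; exact Chebyshev.integral_eval_T_real_measureT_zero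
  · exact Chebyshev.integral_eval_T_real_measureT_of_ne_zero hj

theorem semicircle_density_zero {x : ℝ} (hx : x ∉ Set.Ioc (-2:ℝ) 2) :
    Real.sqrt (4 * 1 - x ^ 2) = 0 := by
  apply Real.sqrt_eq_zero_of_nonpos
  simp only [Set.mem_Ioc, not_and_or, not_lt, not_le] at hx
  rcases hx with h | h <;> nlinarith

theorem semicircle_integral (f : ℝ → ℝ) :
    ∫ x, f x ∂(semicircle 1) =
      ∫ x in (-2:ℝ)..2, (Real.sqrt (4 * 1 - x ^ 2) / (2 * Real.pi * 1)) * f x := by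
  rw [semicircle, integral_withDensity_eq_integral_toReal_smul (by fun_prop) (by simp),
    intervalIntegral.integral_of_le (by norm_num),
    ← integral_indicator measurableSet_Ioc]
  congr 1
  ext x
  have hp : 0 ≤ Real.sqrt (4 * 1 - x ^ 2) / (2 * Real.pi * 1) := by positivity
  rw [ENNReal.toReal_ofReal hp, smul_eq_mul]
  by_cases hx : x ∈ Set.Ioc (-2:ℝ) 2
  · rw [Set.indicator_of_mem hx]
  · rw [Set.indicator_of_notMem hx, semicircle_density_zero hx]; simp

theorem semicircle_integrable {f : ℝ → ℝ} (hf : Continuous f) :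
    Integrable f (semicircle 1) := by
  rw [semicircle, integrable_withDensity_iff (by fun_prop) (by simp)]
  have h : Integrable ((Set.Icc (-2:ℝ) 2).indicator
      (fun x => f x * (Real.sqrt (4 * 1 - x ^ 2) / (2 * Real.pi * 1)))) := by
    rw [integrable_indicator_iff measurableSet_Icc]
    exact (by fun_prop : Continuous _).continuousOn.integrableOn_compact isCompact_Icc
  refine h.congr (Filter.Eventually.of_forall fun x => ?_)
  symm
  beta_reduce
  have hp : 0 ≤ Real.sqrt (4 * 1 - x ^ 2) / (2 * Real.pi * 1) := by positivity
  rw [ENNReal.toReal_ofReal hp]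
  by_cases hx : x ∈ Set.Icc (-2:ℝ) 2
  · rw [Set.indicator_of_mem hx]
  · rw [Set.indicator_of_notMem hx,
      semicircle_density_zero (fun h => hx (Set.Ioc_subset_Icc_self h))]; simp

theorem semicircle_integral_cos (f : ℝ → ℝ) :
    ∫ x, f x ∂(semicircle 1) =
      (2 / Real.pi) * ∫ θ in (0:ℝ)..Real.pi, f (2 * Real.cos θ) * Real.sin θ ^ 2 := by
  have h := Polynomial.Chebyshev.integral_measureT_eq_integral_cos
    (f := fun u => f (2 * u) * (1 - u ^ 2))
  have h2 : ∀ θ, f (2 * Real.cos θ) * Real.sin θ ^ 2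
      = f (2 * Real.cos θ) * (1 - Real.cos θ ^ 2) := fun θ => by rw [Real.sin_sq]
  simp only [h2]
  rw [← h, Polynomial.Chebyshev.integral_measureT, semicircle_integral]
  have h3 := intervalIntegral.mul_integral_comp_mul_left (a := -1) (b := 1)
    (f := fun x => (Real.sqrt (4 * 1 - x ^ 2) / (2 * Real.pi * 1)) * f x) (2 : ℝ)
  norm_num at h3
  norm_num
  rw [← h3, ← intervalIntegral.integral_const_mul, ← intervalIntegral.integral_const_mul]
  apply intervalIntegral.integral_congr
  intro u hu
  rw [Set.uIcc_of_le (by norm_num)] at hu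
  have hu0 : 0 ≤ 1 - u ^ 2 := by nlinarith [hu.1, hu.2]
  have e1 : √(4 - (2 * u) ^ 2) = 2 * √(1 - u ^ 2) := by
    rw [show 4 - (2 * u) ^ 2 = 2 ^ 2 * (1 - u ^ 2) by ring, Real.sqrt_mul (by norm_num),
      Real.sqrt_sq (by norm_num)]
  have e2 : (1 - u ^ 2) * (√(1 - u ^ 2))⁻¹ = √(1 - u ^ 2) := by
    rw [← div_eq_mul_inv, Real.div_sqrt]
  simp only [e1, Real.sqrt_inv]
  rw [mul_assoc (f _), e2]
  field_simp
  try ring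

open Polynomial in
theorem semicircle_orthonormal (m n : ℕ) :
    ∫ x, (Chebyshev.S ℝ m).eval x * (Chebyshev.S ℝ n).eval x ∂(semicircle 1) =
      if m = n then 1 else 0 := by
  rw [semicircle_integral_cos]
  have e : ∀ θ : ℝ, (Chebyshev.S ℝ m).eval (2 * Real.cos θ) *
      (Chebyshev.S ℝ n).eval (2 * Real.cos θ) * Real.sin θ ^ 2 =
      (1 / 2) * (Real.cos (((m : ℤ) - n : ℤ) * θ) - Real.cos (((m : ℤ) + n + 2 : ℤ) * θ)) := by
    intro θ
    have h1 := Chebyshev.S_two_mul_real_cos θ m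
    have h2 := Chebyshev.S_two_mul_real_cos θ n
    calc _ = ((Chebyshev.S ℝ m).eval (2 * Real.cos θ) * Real.sin θ) *
          ((Chebyshev.S ℝ n).eval (2 * Real.cos θ) * Real.sin θ) := by ring
      _ = _ := by
        rw [h1, h2]
        push_cast
        rw [show ((m:ℝ) - n) * θ = (m + 1) * θ - (n + 1) * θ by ring,
          show ((m:ℝ) + n + 2) * θ = (m + 1) * θ + (n + 1) * θ by ring, Real.cos_sub,
          Real.cos_add]
        ring
  simp only [e]
  rw [intervalIntegral.integral_const_mul, intervalIntegral.integral_sub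
    (Continuous.intervalIntegrable (by fun_prop) _ _)
    (Continuous.intervalIntegrable (by fun_prop) _ _),
    integral_cos_int_mul, integral_cos_int_mul, if_neg (by omega : ¬ ((m:ℤ) + n + 2 = 0))]
  have := Real.pi_ne_zero
  by_cases h : m = n
  · subst h; simp; field_simp
  · rw [if_neg (by omega), if_neg h]; simp

instance : IsProbabilityMeasure (semicircle 1) := by
  have hfin : IsFiniteMeasure (semicircle 1) :=
    (integrable_const_iff_isFiniteMeasure (one_ne_zero (α := ℝ))).1
      (semicircle_integrable continuous_const)
  have h := semicircle_orthonormal 0 0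
  simp [measureReal_def] at h
  exact ⟨(ENNReal.toReal_eq_one_iff _).1 h⟩

theorem sum_finsuppAntidiag_eq (K d : ℕ) (g : (Fin K → ℕ) → ℝ) :
    ∑ a ∈ Finset.finsuppAntidiag Finset.univ d, g a =
      ∑ a ∈ Finset.Nat.antidiagonalTuple K d, g a := by
  refine Finset.sum_bij (fun a _ => (a : Fin K → ℕ)) ?_ ?_ ?_ ?_
  · intro a ha
    simp only [Finset.mem_finsuppAntidiag] at ha
    exact Finset.Nat.mem_antidiagonalTuple.2 ha.1
  · intro a _ b _ h
    exact DFunLike.coe_injective h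
  · intro b hb
    refine ⟨Finsupp.equivFunOnFinite.symm b, ?_, rfl⟩
    simp only [Finset.mem_finsuppAntidiag]
    exact ⟨Finset.Nat.mem_antidiagonalTuple.1 hb, Finset.subset_univ _⟩
  · intro a _; rfl

theorem card_antidiagonalTuple_choose (k d : ℕ) :
    (Finset.Nat.antidiagonalTuple (k + 1) d).card = (k + d).choose k := by
  have h := sum_finsuppAntidiag_eq (k + 1) d (fun _ => 1)
  simp only [Finset.sum_const, nsmul_eq_mul, mul_one] at h
  rw [Finset.card_finsuppAntidiag_nat_eq_choose] at h
  have h' : (Finset.univ : Finset (Fin (k+1))).card + d - 1 = k + d := by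
    rw [Finset.card_univ, Fintype.card_fin]; omega
  rw [h'] at h
  rw [← Nat.cast_inj (R := ℝ), ← h, Nat.choose_symm_add]

/-- generating series. -/
noncomputable def genSer (F : ℝ → PowerSeries ℝ) (k : ℕ) (x : Fin (k + 1) → ℝ) : PowerSeries ℝ :=
  PowerSeries.X ^ k * ∏ i, F (x i)

theorem coeff_genSer (F : ℝ → PowerSeries ℝ) (k n : ℕ) (x : Fin (k + 1) → ℝ) :
    PowerSeries.coeff n (genSer F k x) = if k ≤ n then
      ∑ a ∈ Finset.Nat.antidiagonalTuple (k + 1) (n - k),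
        ∏ i, PowerSeries.coeff (a i) (F (x i)) else 0 := by
  rw [genSer, PowerSeries.coeff_X_pow_mul']
  split_ifs
  · rw [PowerSeries.coeff_prod]
    exact sum_finsuppAntidiag_eq (k + 1) (n - k)
      (fun a => ∏ i, PowerSeries.coeff (a i) (F (x i)))
  · rfl

theorem genSer_zero (F : ℝ → PowerSeries ℝ) (x : Fin 1 → ℝ) : genSer F 0 x = F (x 0) := by
  simp [genSer]

theorem genSer_succ (F : ℝ → PowerSeries ℝ) (q : ℝ → PowerSeries ℝ) (hq : ∀ x, F x * q x = 1)
    (k : ℕ) (x : Fin (k + 2) → ℝ) :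
    genSer F (k + 1) x * q (x 0) = PowerSeries.X * genSer F k (fun i => x i.succ) := by
  rw [genSer, genSer, Fin.prod_univ_succ, pow_succ]
  linear_combination (PowerSeries.X ^ k * PowerSeries.X * ∏ i : Fin (k+1), F (x i.succ)) * hq (x 0)

/-- geometric series -/
noncomputable def geomSer (x : ℝ) : PowerSeries ℝ := PowerSeries.mk fun n => x ^ n

theorem geomSer_mul (x : ℝ) : geomSer x * (1 - PowerSeries.C x * PowerSeries.X) = 1 := by
  ext n
  rw [mul_sub, mul_one, mul_comm (PowerSeries.C x), ← mul_assoc]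
  cases n with
  | zero => simp [geomSer]
  | succ n => simp [geomSer, PowerSeries.coeff_succ_mul_X, PowerSeries.coeff_one, pow_succ]

/-- Chebyshev series -/
noncomputable def chebSer (x : ℝ) : PowerSeries ℝ :=
  PowerSeries.mk fun n => (Polynomial.Chebyshev.S ℝ n).eval x

theorem chebSer_mul (x : ℝ) :
    chebSer x * (1 - PowerSeries.C x * PowerSeries.X + PowerSeries.X * PowerSeries.X) = 1 := by
  have e : chebSer x * (1 - PowerSeries.C x * PowerSeries.X + PowerSeries.X * PowerSeries.X)
    = chebSer x - PowerSeries.C x * (chebSer x * PowerSeries.X)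
      + (chebSer x * PowerSeries.X) * PowerSeries.X := by ring
  rw [e]
  ext n
  rcases n with _ | _ | n
  · simp [chebSer]
  · simp [chebSer, PowerSeries.coeff_succ_mul_X, PowerSeries.coeff_one]
  · have h := congrArg (Polynomial.eval x) (Polynomial.Chebyshev.S_add_two ℝ (n : ℤ))
    simp only [Polynomial.eval_sub, Polynomial.eval_mul, Polynomial.eval_X] at h
    simp only [chebSer, map_add, map_sub, PowerSeries.coeff_C_mul, PowerSeries.coeff_succ_mul_X,
      PowerSeries.coeff_one, PowerSeries.coeff_mk]
    push_cast
    rw [show ((n:ℤ) + 1 + 1) = n + 2 by ring, h]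
    simp

theorem divDiffMonomial_eq (k m : ℕ) (x : Fin (k + 1) → ℝ) :
    divDiffMonomial k m x = PowerSeries.coeff m (genSer geomSer k x) := by
  rw [coeff_genSer, divDiffMonomial]; simp [geomSer]

/-- Linear version of `divDiff`. -/
noncomputable def divDiffLin (k : ℕ) (x : Fin (k + 1) → ℝ) : Polynomial ℝ →ₗ[ℝ] ℝ :=
  Polynomial.lsum fun m => LinearMap.mulRight ℝ (divDiffMonomial k m x)

theorem divDiff_eq_lin (k : ℕ) (p : Polynomial ℝ) (x : Fin (k + 1) → ℝ) :
    divDiff k p x = divDiffLin k x p := by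
  rw [divDiff, divDiffLin, Polynomial.lsum_apply, Polynomial.sum_over_range _ (by simp)]
  simp

theorem divDiffLin_X_pow (k m : ℕ) (x : Fin (k + 1) → ℝ) :
    divDiffLin k x (Polynomial.X ^ m) = PowerSeries.coeff m (genSer geomSer k x) := by
  rw [divDiffLin, Polynomial.lsum_apply, ← Polynomial.monomial_one_right_eq_X_pow,
    Polynomial.sum_monomial_index _ _ (by simp)]
  simp [divDiffMonomial_eq]

theorem divDiffLin_zero (x : Fin 1 → ℝ) (p : Polynomial ℝ) :
    divDiffLin 0 x p = p.eval (x 0) := by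
  have : divDiffLin 0 x = Polynomial.leval (x 0) := by
    apply Polynomial.lhom_ext'
    intro n
    ext
    simp [Polynomial.monomial_one_right_eq_X_pow, divDiffLin_X_pow, genSer_zero, geomSer]
  rw [this]; rfl

theorem coeff_geom_succ (k m : ℕ) (x : Fin (k + 2) → ℝ) :
    PowerSeries.coeff (m + 1) (genSer geomSer (k + 1) x) =
      x 0 * PowerSeries.coeff m (genSer geomSer (k + 1) x) +
      PowerSeries.coeff m (genSer geomSer k (fun i => x i.succ)) := by
  have h := genSer_succ geomSer _ geomSer_mul k x
  have e : genSer geomSer (k + 1) x * (1 - PowerSeries.C (x 0) * PowerSeries.X) =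
    genSer geomSer (k + 1) x - PowerSeries.C (x 0) * (genSer geomSer (k + 1) x * PowerSeries.X) := by
    ring
  rw [e, mul_comm PowerSeries.X] at h
  have h2 := congrArg (PowerSeries.coeff (m + 1)) h
  simp only [map_sub, PowerSeries.coeff_C_mul, PowerSeries.coeff_succ_mul_X] at h2
  linarith

theorem divDiffLin_X_mul (k : ℕ) (x : Fin (k + 2) → ℝ) (p : Polynomial ℝ) :
    divDiffLin (k + 1) x (Polynomial.X * p) =
      x 0 * divDiffLin (k + 1) x p + divDiffLin k (fun i => x i.succ) p := by
  induction p using Polynomial.induction_on' with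
  | add p q hp hq => rw [mul_add, map_add, map_add, map_add, hp, hq]; ring
  | monomial n a =>
    rw [← Polynomial.C_mul_X_pow_eq_monomial, ← Polynomial.smul_eq_C_mul, mul_smul_comm,
      ← pow_succ', map_smul, map_smul, map_smul, divDiffLin_X_pow, divDiffLin_X_pow,
      divDiffLin_X_pow, coeff_geom_succ]
    simp only [smul_eq_mul]; ring

theorem coeff_cheb_succ (k m : ℕ) (x : Fin (k + 2) → ℝ) :
    PowerSeries.coeff (m + 2) (genSer chebSer (k + 1) x) =
      x 0 * PowerSeries.coeff (m + 1) (genSer chebSer (k + 1) x)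
      - PowerSeries.coeff m (genSer chebSer (k + 1) x) +
      PowerSeries.coeff (m + 1) (genSer chebSer k (fun i => x i.succ)) := by
  have h := genSer_succ chebSer _ chebSer_mul k x
  have e : genSer chebSer (k + 1) x *
      (1 - PowerSeries.C (x 0) * PowerSeries.X + PowerSeries.X * PowerSeries.X) =
    genSer chebSer (k + 1) x - PowerSeries.C (x 0) * (genSer chebSer (k + 1) x * PowerSeries.X)
     + genSer chebSer (k + 1) x * PowerSeries.X * PowerSeries.X := by
    ring
  rw [e, mul_comm PowerSeries.X] at h
  have h2 := congrArg (PowerSeries.coeff (m + 2)) h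
  simp only [map_sub, map_add, PowerSeries.coeff_C_mul, PowerSeries.coeff_succ_mul_X] at h2
  linarith

theorem divDiffLin_S (n : ℕ) : ∀ (k : ℕ) (x : Fin (k + 1) → ℝ),
    divDiffLin k x (Polynomial.Chebyshev.S ℝ n) = PowerSeries.coeff n (genSer chebSer k x) := by
  have h0 : ∀ (x : Fin 1 → ℝ) (n : ℕ),
      divDiffLin 0 x (Polynomial.Chebyshev.S ℝ n) = PowerSeries.coeff n (genSer chebSer 0 x) := by
    intro x n
    rw [divDiffLin_zero, genSer_zero, chebSer, PowerSeries.coeff_mk]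
  induction n using Nat.twoStepInduction with
  | zero =>
    intro k x
    have h := divDiffLin_X_pow k 0 x
    simp only [pow_zero] at h
    simp only [Nat.cast_zero, Polynomial.Chebyshev.S_zero]
    rw [h, coeff_genSer, coeff_genSer]
    simp [geomSer, chebSer]
    rcases k with _ | k <;> simp [Finset.Nat.antidiagonalTuple_zero_right]
  | one =>
    intro k x
    have h := divDiffLin_X_pow k 1 x
    simp only [pow_one] at h
    simp only [Nat.cast_one, Polynomial.Chebyshev.S_one]
    rw [h, coeff_genSer, coeff_genSer]
    rcases k with _ | _ | k
    · simp [geomSer, chebSer]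
    · simp [geomSer, chebSer, Finset.Nat.antidiagonalTuple_zero_right]
    · simp
  | more n ih1 ih2 =>
    intro k x
    cases k with
    | zero => exact h0 x _
    | succ k =>
      have e : Polynomial.Chebyshev.S ℝ ((n + 2 : ℕ) : ℤ) =
          Polynomial.X * Polynomial.Chebyshev.S ℝ ((n + 1 : ℕ) : ℤ)
            - Polynomial.Chebyshev.S ℝ ((n : ℕ) : ℤ) := by
        push_cast; exact Polynomial.Chebyshev.S_add_two ℝ n
      rw [e, map_sub, divDiffLin_X_mul, ih1, ih2, ih2, coeff_cheb_succ]
      ring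

/-- Expansion in Chebyshev polynomials. -/
theorem exists_cheb_expansion (p : Polynomial ℝ) :
    ∃ (N : ℕ) (c : ℕ → ℝ), p = ∑ n ∈ Finset.range N, c n • Polynomial.Chebyshev.S ℝ n := by
  set V := Submodule.span ℝ (Set.range fun n : ℕ => Polynomial.Chebyshev.S ℝ n) with hV
  have hS : ∀ n : ℕ, Polynomial.Chebyshev.S ℝ n ∈ V := fun n => Submodule.subset_span ⟨n, rfl⟩
  have hX : ∀ q ∈ V, Polynomial.X * q ∈ V := by
    intro q hq
    induction hq using Submodule.span_induction with
    | mem y hy =>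
      obtain ⟨n, rfl⟩ := hy
      cases n with
      | zero => simpa using hS 1
      | succ n =>
        have h := Polynomial.Chebyshev.S_add_two ℝ n
        have := V.add_mem (hS (n + 2)) (hS n)
        push_cast at this
        rw [h] at this
        simpa using this
    | zero => simp
    | add a b _ _ ha hb => rw [mul_add]; exact V.add_mem ha hb
    | smul r a _ ha => rw [mul_smul_comm]; exact V.smul_mem _ ha
  have hpow : ∀ n : ℕ, (Polynomial.X : Polynomial ℝ) ^ n ∈ V := by
    intro n
    induction n with
    | zero => simpa using hS 0
    | succ n ih => rw [pow_succ']; exact hX _ ih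
  have hp : p ∈ V := by
    induction p using Polynomial.induction_on' with
    | add a b ha hb => exact V.add_mem ha hb
    | monomial n a =>
      rw [← Polynomial.C_mul_X_pow_eq_monomial, ← Polynomial.smul_eq_C_mul]
      exact V.smul_mem _ (hpow n)
  obtain ⟨c, hc⟩ := Finsupp.mem_span_range_iff_exists_finsupp.1 hp
  refine ⟨c.support.sup id + 1, c, ?_⟩
  rw [← hc, Finsupp.sum]
  apply Finset.sum_subset
  · intro n hn
    rw [Finset.mem_range, Nat.lt_succ_iff]
    exact Finset.le_sup (f := id) hn
  · intro n _ hn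
    rw [Finsupp.notMem_support_iff.1 hn, zero_smul]

/-- `Δᵏ Sₙ`. -/
noncomputable def chebDD (k n : ℕ) (x : Fin (k + 1) → ℝ) : ℝ :=
  PowerSeries.coeff n (genSer chebSer k x)

theorem chebDD_eq (k n : ℕ) (x : Fin (k + 1) → ℝ) : chebDD k n x =
    ∑ a ∈ (if k ≤ n then Finset.Nat.antidiagonalTuple (k + 1) (n - k) else ∅),
        ∏ i, (Polynomial.Chebyshev.S ℝ (a i)).eval (x i) := by
  rw [chebDD, coeff_genSer]
  split_ifs <;> simp [chebSer]

theorem chebDD_self (k : ℕ) (x : Fin (k + 1) → ℝ) : chebDD k k x = 1 := by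
  simp [chebDD_eq, Finset.Nat.antidiagonalTuple_zero_right]

theorem integrable_prod_aux (k : ℕ) (a b : Fin (k + 1) → ℕ) :
    Integrable (fun x : Fin (k + 1) → ℝ =>
      (∏ i, (Polynomial.Chebyshev.S ℝ (a i)).eval (x i)) *
      (∏ i, (Polynomial.Chebyshev.S ℝ (b i)).eval (x i)))
      (Measure.pi fun _ => semicircle 1) := by
  simp only [← Finset.prod_mul_distrib]
  exact Integrable.fintype_prod (f := fun i t => (Polynomial.Chebyshev.S ℝ (a i)).eval t *
    (Polynomial.Chebyshev.S ℝ (b i)).eval t) (fun i => semicircle_integrable (by fun_prop))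

theorem integral_prod_aux (k : ℕ) (a b : Fin (k + 1) → ℕ) :
    ∫ x : Fin (k + 1) → ℝ,
      (∏ i, (Polynomial.Chebyshev.S ℝ (a i)).eval (x i)) *
      (∏ i, (Polynomial.Chebyshev.S ℝ (b i)).eval (x i))
      ∂(Measure.pi fun _ => semicircle 1) = if a = b then 1 else 0 := by
  simp only [← Finset.prod_mul_distrib]
  rw [integral_fintype_prod_eq_prod (f := fun i t => (Polynomial.Chebyshev.S ℝ (a i)).eval t *
    (Polynomial.Chebyshev.S ℝ (b i)).eval t)]
  simp only [semicircle_orthonormal]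
  rw [Finset.prod_ite_zero]
  simp [funext_iff]

theorem integrable_chebDD_mul (k m n : ℕ) :
    Integrable (fun x => chebDD k m x * chebDD k n x) (Measure.pi fun _ => semicircle 1) := by
  simp only [chebDD_eq, Finset.sum_mul_sum]
  exact integrable_finsetSum _ fun a _ => integrable_finsetSum _ fun b _ =>
    integrable_prod_aux k a b

theorem integral_chebDD_mul (k m n : ℕ) :
    ∫ x, chebDD k m x * chebDD k n x ∂(Measure.pi fun _ => semicircle 1) =
      if m = n then (n.choose k : ℝ) else 0 := by
  simp only [chebDD_eq, Finset.sum_mul_sum]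
  rw [integral_finsetSum _ fun a _ => integrable_finsetSum _ fun b _ =>
    integrable_prod_aux k a b]
  simp only [integral_finsetSum _ fun b _ => integrable_prod_aux k _ b, integral_prod_aux]
  simp only [Finset.sum_ite_eq]
  by_cases hmn : m = n
  · subst hmn
    rw [if_pos rfl, Finset.sum_congr rfl (fun a ha => if_pos ha)]
    split_ifs with h
    · rw [Finset.sum_const, card_antidiagonalTuple_choose, Nat.add_sub_cancel' h]; simp
    · rw [Nat.choose_eq_zero_of_lt (by omega)]; simp
  · rw [if_neg hmn]
    apply Finset.sum_eq_zero
    intro a ha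
    rw [if_neg]
    intro hb
    split_ifs at ha hb <;> simp_all [Finset.Nat.mem_antidiagonalTuple]
    omega

theorem integral_sum_sq (k N : ℕ) (c : ℕ → ℝ) :
    ∫ x, (∑ n ∈ Finset.range N, c n * chebDD k n x) ^ 2 ∂(Measure.pi fun _ => semicircle 1) =
      ∑ n ∈ Finset.range N, c n ^ 2 * (n.choose k : ℝ) := by
  have hi : ∀ a b, Integrable (fun x => c a * chebDD k a x * (c b * chebDD k b x))
      (Measure.pi fun _ => semicircle 1) := by
    intro a b
    convert (integrable_chebDD_mul k a b).const_mul (c a * c b) using 2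
    ring
  have hv : ∀ a b, ∫ x, c a * chebDD k a x * (c b * chebDD k b x)
      ∂(Measure.pi fun _ => semicircle 1) = if a = b then c b ^ 2 * (b.choose k : ℝ) else 0 := by
    intro a b
    have : ∀ x, c a * chebDD k a x * (c b * chebDD k b x) =
      (c a * c b) * (chebDD k a x * chebDD k b x) := fun x => by ring
    simp only [this]
    rw [integral_const_mul, integral_chebDD_mul]
    split_ifs with h
    · subst h; ring
    · simp
  simp only [sq (Finset.sum _ _), Finset.sum_mul_sum]
  rw [integral_finsetSum _ fun a _ => integrable_finsetSum _ fun b _ => hi a b]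
  simp only [integral_finsetSum _ fun b _ => hi _ b, hv, Finset.sum_ite_eq]
  exact Finset.sum_congr rfl fun a ha => if_pos ha

theorem integral_chebDD (k n : ℕ) :
    ∫ x, chebDD k n x ∂(Measure.pi fun _ => semicircle 1) = if n = k then 1 else 0 := by
  have h := integral_chebDD_mul k n k
  simp only [chebDD_self, mul_one] at h
  rw [h]; simp

theorem integrable_chebDD (k n : ℕ) :
    Integrable (chebDD k n) (Measure.pi fun _ => semicircle 1) := by
  have h := integrable_chebDD_mul k n k
  simpa only [chebDD_self, mul_one] using h

/-- Generalized Poincaré inequality for the standard semicircle law (scalar form, with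
constant `1`): for every `k ≥ 0` and every real polynomial `p`,
`∫ (Δᵏp − M_k(p))² dS(0,1)^{⊗(k+1)} ≤ (k+1)·∫ (Δ^{k+1}p)² dS(0,1)^{⊗(k+2)}`,
where `M_k(p)` is the mean of `Δᵏp` against `S(0,1)^{⊗(k+1)}`. -/
theorem semicircle_generalized_poincare (k : ℕ) (p : Polynomial ℝ) :
    ∫ x : Fin (k + 1) → ℝ,
        (divDiff k p x -
          ∫ y : Fin (k + 1) → ℝ, divDiff k p y ∂(Measure.pi fun _ => semicircle 1)) ^ 2
        ∂(Measure.pi fun _ => semicircle 1) ≤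
      (k + 1 : ℝ) *
        ∫ x : Fin (k + 2) → ℝ, (divDiff (k + 1) p x) ^ 2 ∂(Measure.pi fun _ => semicircle 1) := by

  obtain ⟨N, c, rfl⟩ := exists_cheb_expansion p
  have hD : ∀ (j : ℕ) (x : Fin (j + 1) → ℝ),
      divDiff j (∑ n ∈ Finset.range N, c n • Polynomial.Chebyshev.S ℝ n) x =
        ∑ n ∈ Finset.range N, c n * chebDD j n x := by
    intro j x
    rw [divDiff_eq_lin, map_sum]
    refine Finset.sum_congr rfl fun n _ => ?_
    rw [map_smul, divDiffLin_S, smul_eq_mul, chebDD]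
  simp only [hD]
  have hM : ∫ y : Fin (k + 1) → ℝ, ∑ n ∈ Finset.range N, c n * chebDD k n y
      ∂(Measure.pi fun _ => semicircle 1) = if k ∈ Finset.range N then c k else 0 := by
    rw [integral_finsetSum _ fun n _ => (integrable_chebDD k n).const_mul _]
    simp only [integral_const_mul, integral_chebDD, mul_ite, mul_one, mul_zero,
      Finset.sum_ite_eq']
  rw [hM, integral_sum_sq]
  have hL : ∀ x : Fin (k + 1) → ℝ, ∑ n ∈ Finset.range N, c n * chebDD k n x -
      (if k ∈ Finset.range N then c k else 0) =
      ∑ n ∈ Finset.range N, (if n = k then 0 else c n) * chebDD k n x := by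
    intro x
    rw [← Finset.sum_ite_eq' (Finset.range N) k c, ← Finset.sum_sub_distrib]
    refine Finset.sum_congr rfl fun n _ => ?_
    split_ifs with h
    · subst h; rw [chebDD_self]; ring
    · ring
  simp only [hL]
  rw [integral_sum_sq, Finset.mul_sum]
  refine Finset.sum_le_sum fun n _ => ?_
  have hc : ((n.choose (k + 1) : ℝ)) * (k + 1) = n.choose k * ((n - k : ℕ) : ℝ) := by
    exact_mod_cast Nat.choose_succ_right_eq n k
  split_ifs with h
  · simp only [ne_eq, OfNat.ofNat_ne_zero, not_false_eq_true, zero_pow, zero_mul]; positivity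
  · have : (k + 1 : ℝ) * (c n ^ 2 * n.choose (k + 1)) =
        c n ^ 2 * (n.choose k * ((n - k : ℕ) : ℝ)) := by rw [← hc]; ring
    rw [this]
    refine mul_le_mul_of_nonneg_left ?_ (sq_nonneg _)
    rcases lt_or_gt_of_ne h with h | h
    · rw [Nat.choose_eq_zero_of_lt h]; simp
    · have : (1 : ℝ) ≤ ((n - k : ℕ) : ℝ) := by exact_mod_cast (by omega : 1 ≤ n - k)
      exact le_mul_of_one_le_right (by positivity) this
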